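/- Let Ω ⊆ ℝ^m be open and let f : Ω → ℝ^{2n+1} be Lipschitz continuous as a map into the Heisenberg group ℍ^n, i.e. there is L with d_K(f(x), f(y)) ≤ L·|x−y| for all x, y ∈ Ω. Then for almost every x ∈ Ω (with respect to Lebesgue measure), f is (Fréchet) differentiable at x and the rank of the derivative Df(x) : ℝ^m → ℝ^{2n+1} is at most n. -/

import Mathlib

open Metric Set MeasureTheory Topology

/-- The index of the coordinate `x_j` in `ℝ^{2n+1}`. -/
def xI (n : ℕ) (j : Fin n) : Fin (2*n+1) := ⟨2*j.1, by have := j.2; omega⟩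

/-- The index of the coordinate `y_j` in `ℝ^{2n+1}`. -/
def yI (n : ℕ) (j : Fin n) : Fin (2*n+1) := ⟨2*j.1+1, by have := j.2; omega⟩

/-- The index of the coordinate `t` in `ℝ^{2n+1}`. -/
def tI (n : ℕ) : Fin (2*n+1) := Fin.last (2*n)

/-- The Korányi metric on the Heisenberg group `ℍ^n = ℝ^{2n+1}`:
`d_K(p,q) = (|z-z'|^4 + |t - t' + 2 ∑_j (x_j' y_j - x_j y_j')|^2)^{1/4}`. -/
noncomputable def dK (n : ℕ) (p q : EuclideanSpace ℝ (Fin (2*n+1))) : ℝ :=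
  ((∑ i : Fin (2*n), (p (Fin.castSucc i) - q (Fin.castSucc i)) ^ 2) ^ 2 +
    (p (tI n) - q (tI n) +
      2 * ∑ j : Fin n, (q (xI n j) * p (yI n j) - p (xI n j) * q (yI n j))) ^ 2) ^ ((1:ℝ)/4)

/-!
Write `f = (Z, t)` with `Z` horizontal and `t` vertical. The Korányi Lipschitz condition says that
`Z` is Lipschitz and that `t x - t y + ω (Z x) (Z y) = O(‖x - y‖ ^ 2)`, where `ω` is twice the
symplectic form. At a point where `Z` is differentiable with derivative `A`, taking `y` to be that
point shows that `t` is differentiable and that its derivative is determined by `A`, so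
`rank Df = rank A`. Summing the same estimate around a closed polygon cancels `t` and bounds the
`ω`-area of the image polygon by the sum of the squared edge lengths; blowing up, the same
holds for the linear map `A`. A regular `N`-gon inscribed in an ellipse has area of order one but
sum of squared edge lengths of order `1 / N`, so `ω (A u) (A v) = 0`: the range of `A` is isotropic
in a symplectic space of dimension `2 * n`, hence has dimension at most `n`.
-/

open Filter Module

section PolygonArea

section Algebra

variable {R M N : Type*} [CommRing R] [AddCommGroup M] [Module R M] [AddCommGroup N] [Module R N]

/-- The area, measured by the bilinear map `B`, swept out from the origin by the polygonal path
with vertices `p 0, …, p n`; it carries no factor `1 / 2`, so that it makes sense over any ring.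
It is the area enclosed by a closed polygon when `p n = p 0`. -/
def polygonArea (B : M →ₗ[R] M →ₗ[R] N) (p : ℕ → M) (n : ℕ) : N :=
  ∑ i ∈ Finset.range n, B (p i) (p (i + 1))

theorem polygonArea_smul (B : M →ₗ[R] M →ₗ[R] N) (c : R) (p : ℕ → M) (n : ℕ) :
    polygonArea B (fun i => c • p i) n = c ^ 2 • polygonArea B p n := by
  simp only [polygonArea, map_smul, LinearMap.smul_apply, smul_smul, Finset.smul_sum, sq]

theorem polygonArea_sub_const {B : M →ₗ[R] M →ₗ[R] N} (hB : B.IsAlt) {p : ℕ → M} {n : ℕ}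
    (hp : p n = p 0) (a : M) : polygonArea B (fun i => p i - a) n = polygonArea B p n := by
  have hterm : ∀ i, B (p i - a) (p (i + 1) - a) =
      B (p i) (p (i + 1)) - (B (p i) a - B (p (i + 1)) a) := fun i => by
    simp only [map_sub, LinearMap.sub_apply, hB a, ← hB.neg (p (i + 1)) a]
    abel
  simp only [polygonArea, hterm]
  rw [Finset.sum_sub_distrib, Finset.sum_range_sub' fun i => B (p i) a, hp, sub_self, sub_zero]

end Algebra

variable {E W : Type*} [NormedAddCommGroup E] [NormedSpace ℝ E]
  [NormedAddCommGroup W] [NormedSpace ℝ W]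

/-- The point at angle `a` of the ellipse with conjugate semi-diameters `u` and `v`; regular
polygons inscribed in it are the test polygons for isoperimetric inequalities. -/
noncomputable def ellipsePoint (u v : E) (a : ℝ) : E := Real.cos a • u + Real.sin a • v

theorem apply_ellipsePoint_ellipsePoint {B : E →ₗ[ℝ] E →ₗ[ℝ] W} (hB : B.IsAlt) (u v : E)
    (a b : ℝ) : B (ellipsePoint u v a) (ellipsePoint u v b) = Real.sin (b - a) • B u v := by
  simp only [ellipsePoint, map_add, map_smul, LinearMap.add_apply, LinearMap.smul_apply, hB u, hB v,
    ← hB.neg u v, Real.sin_sub]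
  module

theorem norm_ellipsePoint_sub_le (u v : E) (a b : ℝ) :
    ‖ellipsePoint u v a - ellipsePoint u v b‖ ≤ |a - b| * (‖u‖ + ‖v‖) :=
  calc ‖ellipsePoint u v a - ellipsePoint u v b‖
      = ‖(Real.cos a - Real.cos b) • u + (Real.sin a - Real.sin b) • v‖ := by
        congr 1
        simp only [ellipsePoint]
        module
    _ ≤ |Real.cos a - Real.cos b| * ‖u‖ + |Real.sin a - Real.sin b| * ‖v‖ := by
        simpa only [norm_smul, Real.norm_eq_abs] using
          norm_add_le ((Real.cos a - Real.cos b) • u) ((Real.sin a - Real.sin b) • v)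
    _ ≤ |a - b| * ‖u‖ + |a - b| * ‖v‖ := by
        gcongr ?_ * _ + ?_ * _
        · exact Real.abs_cos_sub_cos_le a b
        · exact Real.abs_sin_sub_sin_le a b
    _ = |a - b| * (‖u‖ + ‖v‖) := by ring

theorem four_mul_norm_le_norm_polygonArea_ellipsePoint {B : E →ₗ[ℝ] E →ₗ[ℝ] W} (hB : B.IsAlt)
    (u v : E) {N : ℕ} (hN : 4 ≤ N) :
    4 * ‖B u v‖ ≤ ‖polygonArea B (fun i => ellipsePoint u v (i * (2 * Real.pi / N))) N‖ := by
  have hN' : (4 : ℝ) ≤ N := by exact_mod_cast hN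
  set θ : ℝ := 2 * Real.pi / N with hθ
  have harea : polygonArea B (fun i => ellipsePoint u v (i * θ)) N = (N * Real.sin θ) • B u v := by
    have hstep : ∀ i : ℕ, ((i + 1 : ℕ) : ℝ) * θ - i * θ = θ := fun i => by push_cast; ring
    simp only [polygonArea, apply_ellipsePoint_ellipsePoint hB, hstep, Finset.sum_const,
      Finset.card_range, mul_smul, Nat.cast_smul_eq_nsmul]
  have hθ_le : θ ≤ Real.pi / 2 := by
    rw [hθ, div_le_div_iff₀ (by positivity) two_pos]
    nlinarith [Real.pi_pos]
  have hsin : 4 ≤ N * Real.sin θ :=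
    calc (4 : ℝ) = N * (2 / Real.pi * θ) := by
          rw [hθ]
          field_simp
          norm_num
      _ ≤ N * Real.sin θ := by
          gcongr
          exact Real.mul_le_sin (by positivity) hθ_le
  rw [harea, norm_smul]
  gcongr
  exact hsin.trans (le_abs_self _)

theorem sum_norm_ellipsePoint_sub_sq_le (u v : E) (N : ℕ) :
    ∑ i ∈ Finset.range N, ‖ellipsePoint u v (i * (2 * Real.pi / N)) -
        ellipsePoint u v ((i + 1 : ℕ) * (2 * Real.pi / N))‖ ^ 2
      ≤ (2 * Real.pi * (‖u‖ + ‖v‖)) ^ 2 / N := by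
  have hedge : ∀ i : ℕ, ‖ellipsePoint u v (i * (2 * Real.pi / N)) -
      ellipsePoint u v ((i + 1 : ℕ) * (2 * Real.pi / N))‖ ≤
        2 * Real.pi / N * (‖u‖ + ‖v‖) := fun i => by
    refine (norm_ellipsePoint_sub_le u v _ _).trans_eq ?_
    rw [← sub_mul, Nat.cast_succ, sub_add_cancel_left, neg_one_mul, abs_neg,
      abs_of_nonneg (by positivity)]
  calc _ ≤ ∑ _i ∈ Finset.range N, (2 * Real.pi / N * (‖u‖ + ‖v‖)) ^ 2 := by
        gcongr with i
        exact hedge i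
    _ = (2 * Real.pi * (‖u‖ + ‖v‖)) ^ 2 / N := by
        rw [Finset.sum_const, Finset.card_range, nsmul_eq_mul]
        rcases eq_or_ne (N : ℝ) 0 with hN | hN
        · simp only [hN, zero_mul, div_zero]
        · field_simp

theorem eq_zero_of_norm_polygonArea_le {B : E →ₗ[ℝ] E →ₗ[ℝ] W} (hB : B.IsAlt) {C : ℝ}
    (hC : ∀ (n : ℕ) (p : ℕ → E), p n = p 0 →
      ‖polygonArea B p n‖ ≤ C * ∑ i ∈ Finset.range n, ‖p i - p (i + 1)‖ ^ 2) :
    B = 0 := by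
  ext u v
  have hbound : ∀ᶠ N : ℕ in atTop,
      4 * ‖B u v‖ ≤ |C| * (2 * Real.pi * (‖u‖ + ‖v‖)) ^ 2 / N := by
    filter_upwards [eventually_ge_atTop 4] with N hN
    have hN₀ : (N : ℝ) ≠ 0 := by positivity
    let p : ℕ → E := fun i => ellipsePoint u v (i * (2 * Real.pi / N))
    have hclosed : p N = p 0 := by simp [p, ellipsePoint, mul_div_cancel₀ _ hN₀]
    calc 4 * ‖B u v‖ ≤ ‖polygonArea B p N‖ :=
          four_mul_norm_le_norm_polygonArea_ellipsePoint hB u v hN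
      _ ≤ C * ∑ i ∈ Finset.range N, ‖p i - p (i + 1)‖ ^ 2 := hC N p hclosed
      _ ≤ |C| * ((2 * Real.pi * (‖u‖ + ‖v‖)) ^ 2 / N) := by
          gcongr
          · exact le_abs_self C
          · exact sum_norm_ellipsePoint_sub_sq_le u v N
      _ = |C| * (2 * Real.pi * (‖u‖ + ‖v‖)) ^ 2 / N := by rw [mul_div_assoc]
  have hlim : 4 * ‖B u v‖ ≤ 0 :=
    ge_of_tendsto (tendsto_const_div_atTop_nhds_zero_nat _) hbound
  exact norm_le_zero_iff.1 (by linarith)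

end PolygonArea

theorem two_mul_finrank_le_of_le_orthogonal {K V : Type*} [Field K] [AddCommGroup V] [Module K V]
    [FiniteDimensional K V] {B : LinearMap.BilinForm K V} (hB : B.Nondegenerate)
    {S : Submodule K V} (hS : S ≤ B.orthogonal S) : 2 * finrank K S ≤ finrank K V := by
  have hdim := Submodule.finrank_mono hS
  have hS_le := Submodule.finrank_le S
  rw [LinearMap.BilinForm.finrank_orthogonal hB] at hdim
  omega

section ContactMaps

variable {E V W : Type*} [NormedAddCommGroup E] [NormedAddCommGroup V] [NormedSpace ℝ V]
  [NormedAddCommGroup W] [NormedSpace ℝ W]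

/-- The vertical half of the Lipschitz condition for a map `(Z, t)` into the step-two group `V × W`
with bracket `ω`: the vertical component of `(Z y, t y)⁻¹ * (Z x, t x)` is `O(‖x - y‖ ^ 2)` on `Ω`,
with constant `C`. The sign of `ω` is the one in the Korányi metric `dK`. -/
def IsContactOn (ω : V →L[ℝ] V →L[ℝ] W) (C : ℝ) (Z : E → V) (t : E → W) (Ω : Set E) : Prop :=
  ∀ x ∈ Ω, ∀ y ∈ Ω, ‖t x - t y + ω (Z x) (Z y)‖ ≤ C * ‖x - y‖ ^ 2

/-- The left-invariant horizontal plane at a point with horizontal component `z`, as the graph of a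
linear map over `V`. -/
noncomputable def horizontalLift (ω : V →L[ℝ] V →L[ℝ] W) (z : V) : V →L[ℝ] V × W :=
  (ContinuousLinearMap.id ℝ V).prod (-ω.flip z)

namespace IsContactOn

variable {ω : V →L[ℝ] V →L[ℝ] W} {C : ℝ} {Z : E → V} {t : E → W} {Ω : Set E}

theorem norm_polygonArea_le (h : IsContactOn ω C Z t Ω) {p : ℕ → E} {n : ℕ}
    (hpΩ : ∀ i ≤ n, p i ∈ Ω) (hp : p n = p 0) :
    ‖polygonArea ω.toLinearMap₁₂ (fun i => Z (p i)) n‖ ≤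
      C * ∑ i ∈ Finset.range n, ‖p i - p (i + 1)‖ ^ 2 := by
  have htelescope : polygonArea ω.toLinearMap₁₂ (fun i => Z (p i)) n =
      ∑ i ∈ Finset.range n, (t (p i) - t (p (i + 1)) + ω (Z (p i)) (Z (p (i + 1)))) := by
    rw [Finset.sum_add_distrib, Finset.sum_range_sub' fun i => t (p i), hp, sub_self, zero_add]
    rfl
  rw [htelescope, Finset.mul_sum]
  refine norm_sum_le_of_le _ fun i hi => ?_
  have hin := Finset.mem_range.1 hi
  exact h _ (hpΩ i hin.le) _ (hpΩ (i + 1) hin)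

variable [NormedSpace ℝ E] {x₀ : E} {A : E →L[ℝ] V}

theorem norm_polygonArea_blowup_le (h : IsContactOn ω C Z t Ω) (hω : ω.toLinearMap₁₂.IsAlt)
    {p : ℕ → E} {n : ℕ} (hp : p n = p 0) {c : ℝ} (hc : c ≠ 0)
    (hpΩ : ∀ i ≤ n, x₀ + c⁻¹ • p i ∈ Ω) :
    ‖polygonArea ω.toLinearMap₁₂ (fun i => c • (Z (x₀ + c⁻¹ • p i) - Z x₀)) n‖ ≤
      C * ∑ i ∈ Finset.range n, ‖p i - p (i + 1)‖ ^ 2 := by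
  have hclosed : x₀ + c⁻¹ • p n = x₀ + c⁻¹ • p 0 := by rw [hp]
  have hedge : ∀ i, ‖x₀ + c⁻¹ • p i - (x₀ + c⁻¹ • p (i + 1))‖ ^ 2 =
      (c ^ 2)⁻¹ * ‖p i - p (i + 1)‖ ^ 2 := fun i => by
    rw [add_sub_add_left_eq_sub, ← smul_sub, norm_smul, mul_pow, Real.norm_eq_abs, sq_abs, inv_pow]
  have harea := h.norm_polygonArea_le hpΩ hclosed
  simp only [hedge, ← Finset.mul_sum] at harea
  rw [polygonArea_smul, polygonArea_sub_const hω (by rw [hp]), norm_smul, norm_pow,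
    Real.norm_eq_abs, sq_abs]
  calc _ ≤ c ^ 2 * (C * ((c ^ 2)⁻¹ * ∑ i ∈ Finset.range n, ‖p i - p (i + 1)‖ ^ 2)) := by gcongr
    _ = C * ∑ i ∈ Finset.range n, ‖p i - p (i + 1)‖ ^ 2 := by field_simp

theorem norm_polygonArea_fderiv_le (h : IsContactOn ω C Z t Ω) (hω : ω.toLinearMap₁₂.IsAlt)
    (hΩ : Ω ∈ 𝓝 x₀) (hA : HasFDerivAt Z A x₀) {p : ℕ → E} {n : ℕ} (hp : p n = p 0) :
    ‖polygonArea ω.toLinearMap₁₂ (fun i => A (p i)) n‖ ≤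
      C * ∑ i ∈ Finset.range n, ‖p i - p (i + 1)‖ ^ 2 := by
  have hmem : ∀ᶠ c : ℝ in atTop, ∀ i ≤ n, x₀ + c⁻¹ • p i ∈ Ω := by
    refine (Set.finite_Iic n).eventually_all.2 fun i _ => ?_
    have hx₀ : Tendsto (fun c : ℝ => x₀ + c⁻¹ • p i) atTop (𝓝 x₀) := by
      simpa using ((tendsto_inv_atTop_zero (𝕜 := ℝ)).smul_const (p i)).const_add x₀
    exact hx₀ hΩ
  have hZ : ∀ i, Tendsto (fun c : ℝ => c • (Z (x₀ + c⁻¹ • p i) - Z x₀)) atTop (𝓝 (A (p i))) :=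
    fun i => hA.lim (p i) (c := id) tendsto_norm_atTop_atTop
  have hωcont : Continuous fun q : V × V => ω q.1 q.2 := by fun_prop
  have harea : Tendsto
      (fun c : ℝ => polygonArea ω.toLinearMap₁₂ (fun i => c • (Z (x₀ + c⁻¹ • p i) - Z x₀)) n)
      atTop (𝓝 (polygonArea ω.toLinearMap₁₂ (fun i => A (p i)) n)) :=
    tendsto_finsetSum _ fun i _ =>
      (hωcont.tendsto (A (p i), A (p (i + 1)))).comp ((hZ i).prodMk_nhds (hZ (i + 1)))
  refine le_of_tendsto harea.norm ?_
  filter_upwards [hmem, eventually_ne_atTop 0] with c hcΩ hc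
  exact h.norm_polygonArea_blowup_le hω hp hc hcΩ

theorem apply_fderiv_fderiv_eq_zero (h : IsContactOn ω C Z t Ω) (hω : ω.toLinearMap₁₂.IsAlt)
    (hΩ : Ω ∈ 𝓝 x₀) (hA : HasFDerivAt Z A x₀) (u v : E) : ω (A u) (A v) = 0 := by
  have hpullback : ω.toLinearMap₁₂.compl₁₂ A.toLinearMap A.toLinearMap = 0 :=
    eq_zero_of_norm_polygonArea_le (fun w => hω (A w)) fun _ _ hp =>
      h.norm_polygonArea_fderiv_le hω hΩ hA hp
  exact LinearMap.congr_fun₂ hpullback u v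

theorem hasFDerivAt_vertical (h : IsContactOn ω C Z t Ω) (hΩ : Ω ∈ 𝓝 x₀)
    (hA : HasFDerivAt Z A x₀) :
    HasFDerivAt t (-(ω.flip (Z x₀)) ∘L A) x₀ := by
  let g : E → W := fun x => t x - t x₀ + ω.flip (Z x₀) (Z x)
  have hg : HasFDerivAt g (0 : E →L[ℝ] W) x₀ := by
    refine Asymptotics.IsBigO.hasFDerivAt (n := 2) (.of_bound C ?_) one_lt_two
    filter_upwards [hΩ] with x hx
    rw [norm_pow, norm_norm]
    exact h x hx x₀ (mem_of_mem_nhds hΩ)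
  have ht : t = fun x => g x - ω.flip (Z x₀) (Z x) + t x₀ := by
    ext x
    simp only [g]
    abel
  rw [ht]
  simpa using (hg.sub ((ω.flip (Z x₀)).hasFDerivAt.comp x₀ hA)).add_const (t x₀)

theorem hasFDerivAt_prodMk (h : IsContactOn ω C Z t Ω) (hΩ : Ω ∈ 𝓝 x₀)
    (hA : HasFDerivAt Z A x₀) :
    HasFDerivAt (fun x => (Z x, t x)) (horizontalLift ω (Z x₀) ∘L A) x₀ :=
  hA.prodMk (h.hasFDerivAt_vertical hΩ hA)

theorem two_mul_finrank_range_fderiv_le [FiniteDimensional ℝ V] {ω : V →L[ℝ] V →L[ℝ] ℝ}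
    {t : E → ℝ} (h : IsContactOn ω C Z t Ω) (hω : ω.toLinearMap₁₂.IsAlt)
    (hω' : ω.toLinearMap₁₂.Nondegenerate) (hΩ : Ω ∈ 𝓝 x₀) (hA : HasFDerivAt Z A x₀) :
    2 * finrank ℝ (LinearMap.range A.toLinearMap) ≤ finrank ℝ V := by
  refine two_mul_finrank_le_of_le_orthogonal hω' ?_
  rintro _ ⟨v, rfl⟩ _ ⟨u, rfl⟩
  exact h.apply_fderiv_fderiv_eq_zero hω hΩ hA u v

end IsContactOn

end ContactMaps

section Heisenberg

variable {n : ℕ}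

/-- Twice the standard symplectic form on `ℝ^{2n}`, the coordinates `Sum.inl j` and `Sum.inr j`
standing for `x_j` and `y_j`. The factor `2` and the sign are those of the Korányi metric `dK`. -/
noncomputable def symplecticForm (n : ℕ) : LinearMap.BilinForm ℝ (Fin n ⊕ Fin n → ℝ) :=
  Matrix.toBilin' ((2 : ℝ) • Matrix.J (Fin n) ℝ)

theorem symplecticForm_apply (p q : Fin n ⊕ Fin n → ℝ) :
    symplecticForm n p q =
      2 * ∑ j, (q (.inl j) * p (.inr j) - p (.inl j) * q (.inr j)) := by
  simp only [symplecticForm, Matrix.J, map_smul, LinearMap.smul_apply, smul_eq_mul,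
    Matrix.toBilin'_apply', Matrix.fromBlocks_mulVec, Matrix.zero_mulVec, Matrix.neg_mulVec,
    Matrix.one_mulVec, zero_add, add_zero, dotProduct, Fintype.sum_sum_type, Sum.elim_inl,
    Sum.elim_inr, Pi.neg_apply, Function.comp_apply]
  rw [← Finset.sum_add_distrib]
  exact congrArg (2 * ·) (Finset.sum_congr rfl fun j _ => by ring)

theorem symplecticForm_isAlt (n : ℕ) : (symplecticForm n).IsAlt := fun p => by
  simp only [symplecticForm_apply, mul_comm, sub_self, Finset.sum_const_zero, zero_mul]

theorem symplecticForm_nondegenerate (n : ℕ) : (symplecticForm n).Nondegenerate := by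
  refine LinearMap.BilinForm.nondegenerate_toBilin'_of_det_ne_zero' _ ?_
  rw [Matrix.det_smul]
  exact mul_ne_zero (by positivity) (Matrix.isUnit_det_J (Fin n) ℝ).ne_zero

/-- The position in `ℝ^{2n+1}` of the horizontal coordinates `x_j` (`Sum.inl j`) and
`y_j` (`Sum.inr j`). -/
def horizontalIndex (n : ℕ) : Fin n ⊕ Fin n → Fin (2 * n + 1) := Sum.elim (xI n) (yI n)

theorem eq_tI_or_eq_horizontalIndex (i : Fin (2 * n + 1)) :
    i = tI n ∨ ∃ k, i = horizontalIndex n k := by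
  rcases Nat.even_or_odd' i.1 with ⟨j, hj | hj⟩
  · rcases lt_or_ge j n with hjn | hjn
    · exact .inr ⟨.inl ⟨j, hjn⟩, Fin.ext hj⟩
    · exact .inl (Fin.ext (by simp only [tI, Fin.val_last]; omega))
  · exact .inr ⟨.inr ⟨j, by omega⟩, Fin.ext hj⟩

theorem exists_horizontalIndex_eq_castSucc (k : Fin n ⊕ Fin n) :
    ∃ i : Fin (2 * n), horizontalIndex n k = i.castSucc := by
  rcases k with j | j
  · exact ⟨⟨2 * j, by omega⟩, rfl⟩
  · exact ⟨⟨2 * j + 1, by omega⟩, rfl⟩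

/-- The horizontal component `(x, y)` of a point of `ℍ^n`. -/
noncomputable def horizontalProj (n : ℕ) :
    EuclideanSpace ℝ (Fin (2 * n + 1)) →L[ℝ] (Fin n ⊕ Fin n → ℝ) :=
  ContinuousLinearMap.pi fun k => EuclideanSpace.proj (horizontalIndex n k)

theorem horizontalProj_prod_proj_injective (n : ℕ) :
    Function.Injective ((horizontalProj n).prod (EuclideanSpace.proj (tI n))) := by
  intro p q hpq
  ext i
  rcases eq_tI_or_eq_horizontalIndex i with rfl | ⟨k, rfl⟩
  · exact congrArg Prod.snd hpq
  · exact congrFun (congrArg Prod.fst hpq) k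

/-- The coordinates of `ℍ^n` split into the horizontal component `(x, y)` and the vertical
component `t`. -/
noncomputable def heisenbergSplit (n : ℕ) :
    EuclideanSpace ℝ (Fin (2 * n + 1)) ≃L[ℝ] (Fin n ⊕ Fin n → ℝ) × ℝ :=
  (LinearMap.linearEquivOfInjective _ (horizontalProj_prod_proj_injective n)
    (by simp [two_mul])).toContinuousLinearEquiv

theorem dK_nonneg (p q : EuclideanSpace ℝ (Fin (2 * n + 1))) : 0 ≤ dK n p q := by
  rw [dK]
  positivity

theorem dK_pow_four (p q : EuclideanSpace ℝ (Fin (2 * n + 1))) :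
    dK n p q ^ 4 = (∑ i : Fin (2 * n), (p i.castSucc - q i.castSucc) ^ 2) ^ 2 +
      (p (tI n) - q (tI n) + symplecticForm n (horizontalProj n p) (horizontalProj n q)) ^ 2 := by
  have hexp : (1 : ℝ) / 4 * (4 : ℕ) = 1 := by norm_num
  rw [dK, ← Real.rpow_natCast, ← Real.rpow_mul (by positivity), hexp, Real.rpow_one,
    symplecticForm_apply]
  rfl

theorem abs_vertical_le_dK_sq (p q : EuclideanSpace ℝ (Fin (2 * n + 1))) :
    |p (tI n) - q (tI n) + symplecticForm n (horizontalProj n p) (horizontalProj n q)| ≤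
      dK n p q ^ 2 := by
  refine abs_le_of_sq_le_sq ?_ (by positivity)
  rw [← pow_mul, dK_pow_four]
  exact le_add_of_nonneg_left (by positivity)

theorem dist_horizontalProj_le_dK (p q : EuclideanSpace ℝ (Fin (2 * n + 1))) :
    dist (horizontalProj n p) (horizontalProj n q) ≤ dK n p q := by
  have hsum : ∑ i : Fin (2 * n), (p i.castSucc - q i.castSucc) ^ 2 ≤ dK n p q ^ 2 := by
    refine le_of_sq_le_sq ?_ (by positivity)
    rw [← pow_mul, dK_pow_four]
    exact le_add_of_nonneg_right (by positivity)
  refine (dist_pi_le_iff (dK_nonneg p q)).2 fun k => ?_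
  obtain ⟨i, hi⟩ := exists_horizontalIndex_eq_castSucc k
  change |p (horizontalIndex n k) - q (horizontalIndex n k)| ≤ dK n p q
  rw [hi]
  refine abs_le_of_sq_le_sq (le_trans ?_ hsum) (dK_nonneg p q)
  exact Finset.single_le_sum (f := fun i : Fin (2 * n) => (p i.castSucc - q i.castSucc) ^ 2)
    (fun _ _ => sq_nonneg _) (Finset.mem_univ i)

theorem lipschitzOnWith_horizontalProj_of_dK_le {X : Type*} [PseudoMetricSpace X] {Ω : Set X}
    {f : X → EuclideanSpace ℝ (Fin (2 * n + 1))} {L : ℝ}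
    (hf : ∀ x ∈ Ω, ∀ y ∈ Ω, dK n (f x) (f y) ≤ L * dist x y) :
    LipschitzOnWith L.toNNReal (fun x => horizontalProj n (f x)) Ω :=
  .of_dist_le' fun x hx y hy => (dist_horizontalProj_le_dK _ _).trans (hf x hx y hy)

variable {E : Type*} [NormedAddCommGroup E] {Ω : Set E}
  {f : E → EuclideanSpace ℝ (Fin (2 * n + 1))} {L : ℝ}

theorem isContactOn_of_dK_le (hf : ∀ x ∈ Ω, ∀ y ∈ Ω, dK n (f x) (f y) ≤ L * dist x y) :
    IsContactOn (symplecticForm n).toContinuousBilinearMap (L ^ 2)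
      (fun x => horizontalProj n (f x)) (fun x => f x (tI n)) Ω := fun x hx y hy =>
  calc _ ≤ dK n (f x) (f y) ^ 2 := abs_vertical_le_dK_sq (f x) (f y)
    _ ≤ (L * dist x y) ^ 2 := pow_le_pow_left₀ (dK_nonneg _ _) (hf x hx y hy) 2
    _ = L ^ 2 * ‖x - y‖ ^ 2 := by rw [mul_pow, dist_eq_norm]

variable [NormedSpace ℝ E]

theorem differentiableAt_and_finrank_range_fderiv_le_of_dK_le {x₀ : E}
    (hf : ∀ x ∈ Ω, ∀ y ∈ Ω, dK n (f x) (f y) ≤ L * dist x y) (hΩ : Ω ∈ 𝓝 x₀)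
    (hH : DifferentiableAt ℝ (fun x => horizontalProj n (f x)) x₀) :
    DifferentiableAt ℝ f x₀ ∧ finrank ℝ (LinearMap.range (fderiv ℝ f x₀).toLinearMap) ≤ n := by
  have hcontact := isContactOn_of_dK_le hf
  obtain ⟨A, hA⟩ := hH
  have hD : HasFDerivAt f ((heisenbergSplit n).symm ∘L
      horizontalLift (symplecticForm n).toContinuousBilinearMap (horizontalProj n (f x₀)) ∘L A)
      x₀ :=
    (heisenbergSplit n).comp_hasFDerivAt_iff'.1 (hcontact.hasFDerivAt_prodMk hΩ hA)
  refine ⟨hD.differentiableAt, ?_⟩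
  have hrank := hcontact.two_mul_finrank_range_fderiv_le (symplecticForm_isAlt n)
    (symplecticForm_nondegenerate n) hΩ hA
  rw [finrank_fintype_fun_eq_card, Fintype.card_sum, Fintype.card_fin] at hrank
  rw [hD.fderiv, ← ContinuousLinearMap.comp_assoc, ContinuousLinearMap.toLinearMap_comp,
    LinearMap.range_comp]
  refine (Submodule.finrank_map_le _ _).trans ?_
  omega

end Heisenberg

theorem stmt14_general {E : Type*} [NormedAddCommGroup E] [NormedSpace ℝ E]
    [FiniteDimensional ℝ E] [MeasurableSpace E] [BorelSpace E] (μ : Measure E) [μ.IsAddHaarMeasure]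
    {n : ℕ} {Ω : Set E} (hΩ : IsOpen Ω) {f : E → EuclideanSpace ℝ (Fin (2 * n + 1))} {L : ℝ}
    (hf : ∀ x ∈ Ω, ∀ y ∈ Ω, dK n (f x) (f y) ≤ L * dist x y) :
    ∀ᵐ x ∂μ, x ∈ Ω →
      DifferentiableAt ℝ f x ∧ finrank ℝ (LinearMap.range (fderiv ℝ f x).toLinearMap) ≤ n := by
  filter_upwards [(lipschitzOnWith_horizontalProj_of_dK_le hf).ae_differentiableWithinAt_of_mem]
    with x hdiff hx
  have hxΩ : Ω ∈ 𝓝 x := hΩ.mem_nhds hx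
  exact differentiableAt_and_finrank_range_fderiv_le_of_dK_le hf hxΩ
    ((hdiff hx).differentiableAt hxΩ)

/-- Proposition 7.9 of the paper. A map `f : Ω → ℍ^n` that is
Lipschitz with respect to the Korányi metric is differentiable almost everywhere on `Ω`,
with `rank Df ≤ n` almost everywhere. -/
theorem stmt14 (m n : ℕ) (Ω : Set (EuclideanSpace ℝ (Fin m))) (hΩ : IsOpen Ω)
    (f : EuclideanSpace ℝ (Fin m) → EuclideanSpace ℝ (Fin (2*n+1))) (L : ℝ)
    (hf : ∀ x ∈ Ω, ∀ y ∈ Ω, dK n (f x) (f y) ≤ L * dist x y) :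
    ∀ᵐ x ∂(volume : Measure (EuclideanSpace ℝ (Fin m))), x ∈ Ω →
      DifferentiableAt ℝ f x ∧
      Module.finrank ℝ (LinearMap.range (fderiv ℝ f x).toLinearMap) ≤ n :=
  stmt14_general volume hΩ hf
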